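/- Let R be a commutative ring and c, d ∈ R. Then H is the internal direct sum of H_h and H_v (that is, H_h + H_v = H and H_h ∩ H_v = 0) if and only if both (c) ∩ (d) = (c·d) and ann(c·d) = M. -/

import Mathlib

open Submodule

section Core
variable (R : Type*) [CommRing R]

/-- The annihilator ideal of an element `c`: `{r : R | c * r = 0}`. -/
def annI (c : R) : Ideal R := LinearMap.ker (LinearMap.lsmul R R c)

lemma mem_annI {R : Type*} [CommRing R] {c r : R} : r ∈ annI R c ↔ c * r = 0 := Iff.rfl

/-- `Z = {(f, g) | c * f = d * g}`. -/
def Zsub (c d : R) : Submodule R (R × R) where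
  carrier := {p | c * p.1 = d * p.2}
  add_mem' := by
    rintro ⟨a1, a2⟩ ⟨b1, b2⟩ ha hb
    simp only [Set.mem_setOf_eq] at *
    simp [mul_add, ha, hb]
  zero_mem' := by simp
  smul_mem' := by
    rintro r ⟨p1, p2⟩ hp
    simp only [Set.mem_setOf_eq, Prod.smul_fst, Prod.smul_snd, smul_eq_mul] at *
    rw [mul_left_comm, hp, mul_left_comm]

lemma mem_Zsub {R : Type*} [CommRing R] {c d f g : R} :
    (f, g) ∈ Zsub R c d ↔ c * f = d * g := Iff.rfl

/-- `B = {(d * r, c * r) | r ∈ R}`. -/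
def Bsub (c d : R) : Submodule R (R × R) :=
  LinearMap.range ((LinearMap.lsmul R R d).prod (LinearMap.lsmul R R c))

/-- The homology `H = Z / B`. -/
abbrev Hmod (c d : R) := Zsub R c d ⧸ (Bsub R c d).comap (Zsub R c d).subtype

/-- The class `[f, g] ∈ H` of a pair `(f, g)` with `c * f = d * g`. -/
def Hmk (c d : R) (f g : R) (h : c * f = d * g) : Hmod R c d :=
  Submodule.Quotient.mk ⟨(f, g), h⟩

/-- The submodule of `H` generated by horizontally pure classes `[f, 0]`. -/
def Hpureh (c d : R) : Submodule R (Hmod R c d) :=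
  span R {h | ∃ f, ∃ hf : c * f = d * 0, h = Hmk R c d f 0 hf}

/-- The submodule of `H` generated by vertically pure classes `[0, g]`. -/
def Hpurev (c d : R) : Submodule R (Hmod R c d) :=
  span R {h | ∃ g, ∃ hg : c * 0 = d * g, h = Hmk R c d 0 g hg}

/-- The ideal `M = {r ∈ ann(cd) | ∃ f ∈ ann(c), g ∈ ann(d), rd = fd ∧ rc = gc}`. -/
def Msub (c d : R) : Ideal R where
  carrier := {r | r ∈ annI R (c * d) ∧
    ∃ f ∈ annI R c, ∃ g ∈ annI R d, r * d = f * d ∧ r * c = g * c}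
  zero_mem' := ⟨zero_mem _, 0, zero_mem _, 0, zero_mem _, by simp, by simp⟩
  add_mem' := by
    rintro a b ⟨ha, f, hf, g, hg, hfd, hgc⟩ ⟨hb, f', hf', g', hg', hfd', hgc'⟩
    exact ⟨add_mem ha hb, f + f', add_mem hf hf', g + g', add_mem hg hg',
      by rw [add_mul, add_mul, hfd, hfd'], by rw [add_mul, add_mul, hgc, hgc']⟩
  smul_mem' := by
    rintro s a ⟨ha, f, hf, g, hg, hfd, hgc⟩
    refine ⟨Submodule.smul_mem _ s ha, s * f, ?_, s * g, ?_, ?_, ?_⟩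
    · simpa [smul_eq_mul] using Submodule.smul_mem _ s hf
    · simpa [smul_eq_mul] using Submodule.smul_mem _ s hg
    · show (s * a) * d = (s * f) * d
      rw [mul_assoc, hfd, mul_assoc]
    · show (s * a) * c = (s * g) * c
      rw [mul_assoc, hgc, mul_assoc]

lemma mem_Msub {R : Type*} [CommRing R] {c d r : R} :
    r ∈ Msub R c d ↔ r ∈ annI R (c * d) ∧
      ∃ f ∈ annI R c, ∃ g ∈ annI R d, r * d = f * d ∧ r * c = g * c := Iff.rfl

end Core

section Helpers
variable {R : Type*} [CommRing R]

lemma dr_mem_annI {c d r : R} (hr : r ∈ annI R (c * d)) : d * r ∈ annI R c := by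
  rw [mem_annI] at *
  rw [← mul_assoc]; exact hr

lemma cr_mem_annI {c d r : R} (hr : r ∈ annI R (c * d)) : c * r ∈ annI R d := by
  rw [mem_annI] at *
  calc d * (c * r) = c * d * r := by ring
  _ = 0 := hr

lemma ann_pair_Z {c d f g : R} (hf : f ∈ annI R c) (hg : g ∈ annI R d) :
    c * f = d * g := by
  rw [mem_annI] at hf hg; rw [hf, hg]

lemma cf_mem_inf {c d f g : R} (h : c * f = d * g) :
    c * f ∈ Ideal.span {c} ⊓ Ideal.span {d} := by
  refine Submodule.mem_inf.mpr ⟨?_, ?_⟩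
  · exact Ideal.mem_span_singleton.mpr ⟨f, rfl⟩
  · exact Ideal.mem_span_singleton.mpr ⟨g, h⟩

lemma rc_mem_inf_ann {c d r : R} (hr : r ∈ annI R (c * d)) :
    r * c ∈ Ideal.span {c} ⊓ annI R d := by
  rw [mem_annI] at hr
  refine Submodule.mem_inf.mpr ⟨Ideal.mem_span_singleton.mpr ⟨r, mul_comm r c⟩, ?_⟩
  rw [mem_annI]
  calc d * (r * c) = c * d * r := by ring
  _ = 0 := hr

lemma rd_mem_ann_inf {c d r : R} (hr : r ∈ annI R (c * d)) :
    r * d ∈ annI R c ⊓ Ideal.span {d} := by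
  rw [mem_annI] at hr
  refine Submodule.mem_inf.mpr ⟨?_, Ideal.mem_span_singleton.mpr ⟨r, mul_comm r d⟩⟩
  rw [mem_annI]
  calc c * (r * d) = c * d * r := by ring
  _ = 0 := hr

lemma HmkPQ {c d P Q : R} (hP : annI R c = Ideal.span {P}) (hQ : annI R d = Ideal.span {Q})
    (f g : R) : c * (f * P) = d * (g * Q) := by
  have hp : c * P = 0 := by
    rw [← mem_annI (R := R)]
    rw [hP]
    exact Ideal.mem_span_singleton_self P
  have hq : d * Q = 0 := by
    rw [← mem_annI (R := R)]
    rw [hQ]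
    exact Ideal.mem_span_singleton_self Q
  calc c * (f * P) = f * (c * P) := by ring
  _ = 0 := by rw [hp, mul_zero]
  _ = g * (d * Q) := by rw [hq, mul_zero]
  _ = d * (g * Q) := by ring

end Helpers

section QuotTypes
variable (R : Type*) [CommRing R]

/-- `ann(cd)/M`. -/
abbrev Tcd (c d : R) :=
  ↥(annI R (c * d)) ⧸ Submodule.comap (annI R (c * d)).subtype (Msub R c d)

/-- `ann(c)/(ann(c)·(d))`. -/
abbrev Th (c d : R) :=
  ↥(annI R c) ⧸ Submodule.comap (annI R c).subtype (annI R c * Ideal.span {d})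

/-- `ann(d)/((c)·ann(d))`. -/
abbrev Tv (c d : R) :=
  ↥(annI R d) ⧸ Submodule.comap (annI R d).subtype (Ideal.span {c} * annI R d)

/-- `((c) ∩ (d))/(cd)`. -/
abbrev T4 (c d : R) :=
  ↥(Ideal.span {c} ⊓ Ideal.span {d}) ⧸
    Submodule.comap (Ideal.span {c} ⊓ Ideal.span {d}).subtype (Ideal.span {c * d})

/-- `((c) ∩ ann(d))/((c)·ann(d))`. -/
abbrev Tc' (c d : R) :=
  ↥(Ideal.span {c} ⊓ annI R d) ⧸
    Submodule.comap (Ideal.span {c} ⊓ annI R d).subtype (Ideal.span {c} * annI R d)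

/-- `(ann(c) ∩ (d))/(ann(c)·(d))`. -/
abbrev Td' (c d : R) :=
  ↥(annI R c ⊓ Ideal.span {d}) ⧸
    Submodule.comap (annI R c ⊓ Ideal.span {d}).subtype (annI R c * Ideal.span {d})

/-- `φ : Z → R`, `(f, g) ↦ c·f`. -/
def phiZ (c d : R) : Zsub R c d →ₗ[R] R :=
  LinearMap.lsmul R R c ∘ₗ (LinearMap.fst R R R ∘ₗ (Zsub R c d).subtype)

end QuotTypes

variable {R : Type*} [CommRing R]

/-!
Two homomorphisms measure the failure of `H = H_h ⊕ H_v`. The map `H → R/(cd)`, `[f, g] ↦ cf`, has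
kernel `H_h + H_v` and image `((c) ∩ (d))/(cd)`. The map `ann(cd) → H`, `r ↦ [dr, 0] = [0, -cr]`,
has kernel `M` and image `H_h ∩ H_v`. So `H_h + H_v = H` exactly when the first map vanishes,
and `H_h ∩ H_v = 0` exactly when the second one does.
-/

section Classes
variable {c d f g f' g' : R}

lemma exists_eq_Hmk (x : Hmod R c d) : ∃ f g, ∃ h : c * f = d * g, x = Hmk R c d f g h := by
  obtain ⟨⟨⟨f, g⟩, h⟩, rfl⟩ := Submodule.Quotient.mk_surjective _ x
  exact ⟨f, g, h, rfl⟩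

lemma Hmk_eq_zero_iff (h : c * f = d * g) :
    Hmk R c d f g h = 0 ↔ ∃ r, d * r = f ∧ c * r = g := by
  rw [Hmk, Submodule.Quotient.mk_eq_zero, mem_comap, Bsub, LinearMap.mem_range]
  simp [Prod.ext_iff]

lemma Hmk_eq_Hmk_iff (h : c * f = d * g) (h' : c * f' = d * g') :
    Hmk R c d f g h = Hmk R c d f' g' h' ↔ ∃ r, d * r = f - f' ∧ c * r = g - g' :=
  sub_eq_zero.symm.trans (Hmk_eq_zero_iff (by rw [mul_sub, mul_sub, h, h']))

lemma Hmk_add_Hmk (h : c * f = d * g) (h' : c * f' = d * g') :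
    Hmk R c d f g h + Hmk R c d f' g' h' =
      Hmk R c d (f + f') (g + g') (by rw [mul_add, mul_add, h, h']) :=
  rfl

lemma Hmk_zero_right_mem_Hpureh (h : c * f = d * 0) : Hmk R c d f 0 h ∈ Hpureh R c d :=
  subset_span ⟨f, h, rfl⟩

lemma Hmk_zero_left_mem_Hpurev (h : c * 0 = d * g) : Hmk R c d 0 g h ∈ Hpurev R c d :=
  subset_span ⟨g, h, rfl⟩

lemma comap_Bsub_le_comap {N : Type*} [AddCommGroup N] [Module R N]
    (α : R × R →ₗ[R] N) (I : Submodule R N) (hα : ∀ r, α (d * r, c * r) ∈ I) :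
    (Bsub R c d).comap (Zsub R c d).subtype ≤ I.comap (α ∘ₗ (Zsub R c d).subtype) := by
  rintro p ⟨r, hr⟩
  rw [mem_comap, LinearMap.comp_apply, ← hr]
  exact hα r

end Classes

section PureClasses
variable (c d : R)

/-- The map `H → R/(d)`, `[f, g] ↦ f`, used to detect vertically pure classes. -/
def fstHom : Hmod R c d →ₗ[R] R ⧸ Ideal.span {d} :=
  mapQ _ _ (LinearMap.fst R R R ∘ₗ (Zsub R c d).subtype) <|
    comap_Bsub_le_comap _ _ fun r => Ideal.mem_span_singleton.mpr (dvd_mul_right d r)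

/-- The map `H → R/(c)`, `[f, g] ↦ g`, used to detect horizontally pure classes. -/
def sndHom : Hmod R c d →ₗ[R] R ⧸ Ideal.span {c} :=
  mapQ _ _ (LinearMap.snd R R R ∘ₗ (Zsub R c d).subtype) <|
    comap_Bsub_le_comap _ _ fun r => Ideal.mem_span_singleton.mpr (dvd_mul_right c r)

/-- The map `H → R/(cd)`, `[f, g] ↦ cf = dg`, induced by `phiZ`; it is the obstruction to writing
a class as a sum of pure ones. -/
def phiHom : Hmod R c d →ₗ[R] R ⧸ Ideal.span {c * d} :=
  mapQ _ _ (phiZ R c d) <|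
    comap_Bsub_le_comap (LinearMap.lsmul R R c ∘ₗ LinearMap.fst R R R) _ fun r =>
      Ideal.mem_span_singleton.mpr ⟨r, (mul_assoc c d r).symm⟩

variable {c d} {f g : R}

lemma Hmk_mem_ker_fstHom_iff (h : c * f = d * g) :
    Hmk R c d f g h ∈ LinearMap.ker (fstHom c d) ↔ d ∣ f :=
  Ideal.Quotient.eq_zero_iff_dvd d f

lemma Hmk_mem_ker_sndHom_iff (h : c * f = d * g) :
    Hmk R c d f g h ∈ LinearMap.ker (sndHom c d) ↔ c ∣ g :=
  Ideal.Quotient.eq_zero_iff_dvd c g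

lemma phiHom_Hmk (h : c * f = d * g) :
    phiHom c d (Hmk R c d f g h) = Ideal.Quotient.mk (Ideal.span {c * d}) (c * f) :=
  rfl

lemma Hmk_mem_ker_phiHom_iff (h : c * f = d * g) :
    Hmk R c d f g h ∈ LinearMap.ker (phiHom c d) ↔ c * d ∣ c * f :=
  Ideal.Quotient.eq_zero_iff_dvd (c * d) (c * f)

variable (c d)

lemma ker_sndHom : LinearMap.ker (sndHom c d) = Hpureh R c d := by
  refine le_antisymm (fun x hx => ?_) (span_le.mpr ?_)
  · obtain ⟨f, g, h, rfl⟩ := exists_eq_Hmk x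
    obtain ⟨r, rfl⟩ := (Hmk_mem_ker_sndHom_iff h).mp hx
    have hf : c * (f - d * r) = d * 0 := by linear_combination h
    have heq : Hmk R c d f (c * r) h = Hmk R c d (f - d * r) 0 hf :=
      (Hmk_eq_Hmk_iff _ _).mpr ⟨r, by ring, by ring⟩
    exact heq ▸ Hmk_zero_right_mem_Hpureh hf
  · rintro _ ⟨f, hf, rfl⟩
    exact (Hmk_mem_ker_sndHom_iff hf).mpr (dvd_zero c)

lemma ker_fstHom : LinearMap.ker (fstHom c d) = Hpurev R c d := by
  refine le_antisymm (fun x hx => ?_) (span_le.mpr ?_)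
  · obtain ⟨f, g, h, rfl⟩ := exists_eq_Hmk x
    obtain ⟨r, rfl⟩ := (Hmk_mem_ker_fstHom_iff h).mp hx
    have hg : c * 0 = d * (g - c * r) := by linear_combination h
    have heq : Hmk R c d (d * r) g h = Hmk R c d 0 (g - c * r) hg :=
      (Hmk_eq_Hmk_iff _ _).mpr ⟨r, by ring, by ring⟩
    exact heq ▸ Hmk_zero_left_mem_Hpurev hg
  · rintro _ ⟨g, hg, rfl⟩
    exact (Hmk_mem_ker_fstHom_iff hg).mpr (dvd_zero d)

end PureClasses

section Sum
variable (c d : R)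

lemma ker_phiHom : LinearMap.ker (phiHom c d) = Hpureh R c d ⊔ Hpurev R c d := by
  refine le_antisymm (fun x hx => ?_) (sup_le (span_le.mpr ?_) (span_le.mpr ?_))
  · obtain ⟨f, g, h, rfl⟩ := exists_eq_Hmk x
    obtain ⟨r, hr⟩ := (Hmk_mem_ker_phiHom_iff h).mp hx
    have hf : c * (f - d * r) = d * 0 := by linear_combination hr
    have hg : c * 0 = d * (g - c * r) := by linear_combination h - hr
    have hadd : Hmk R c d (f - d * r) 0 hf + Hmk R c d 0 (g - c * r) hg = Hmk R c d f g h := by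
      rw [Hmk_add_Hmk, Hmk_eq_Hmk_iff]
      exact ⟨-r, by ring, by ring⟩
    exact hadd ▸ add_mem_sup (Hmk_zero_right_mem_Hpureh hf) (Hmk_zero_left_mem_Hpurev hg)
  · rintro _ ⟨f, hf, rfl⟩
    exact (Hmk_mem_ker_phiHom_iff hf).mpr (by simp [hf])
  · rintro _ ⟨g, hg, rfl⟩
    exact (Hmk_mem_ker_phiHom_iff hg).mpr (by simp)

lemma range_phiHom :
    LinearMap.range (phiHom c d) =
      Submodule.map (Ideal.span {c * d}).mkQ (Ideal.span {c} ⊓ Ideal.span {d}) := by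
  ext y
  constructor
  · rintro ⟨x, rfl⟩
    obtain ⟨f, g, h, rfl⟩ := exists_eq_Hmk x
    exact ⟨c * f, cf_mem_inf h, rfl⟩
  · rintro ⟨x, ⟨hc, hd⟩, rfl⟩
    obtain ⟨f, rfl⟩ := Ideal.mem_span_singleton.mp hc
    obtain ⟨g, hg⟩ := Ideal.mem_span_singleton.mp hd
    exact ⟨Hmk R c d f g hg, phiHom_Hmk hg⟩

lemma Hpureh_sup_Hpurev_eq_top_iff :
    Hpureh R c d ⊔ Hpurev R c d = ⊤ ↔
      Ideal.span {c} ⊓ Ideal.span {d} = Ideal.span {c * d} := by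
  have hle : Ideal.span {c * d} ≤ Ideal.span {c} ⊓ Ideal.span {d} :=
    Ideal.span_singleton_mul_span_singleton c d ▸ Ideal.mul_le_inf
  calc Hpureh R c d ⊔ Hpurev R c d = ⊤
    _ ↔ LinearMap.range (phiHom c d) = ⊥ := by
      rw [← ker_phiHom, LinearMap.ker_eq_top, LinearMap.range_eq_bot]
    _ ↔ Ideal.span {c} ⊓ Ideal.span {d} ≤ Ideal.span {c * d} := by
      rw [range_phiHom, ← LinearMap.le_ker_iff_map, ker_mkQ]
    _ ↔ Ideal.span {c} ⊓ Ideal.span {d} = Ideal.span {c * d} := hle.ge_iff_eq'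

end Sum

section Intersection
variable (c d : R)

/-- The map `ann(cd) → H`, `r ↦ [dr, 0]`, which parametrizes the classes that are both horizontally
and vertically pure. -/
def psiHom : annI R (c * d) →ₗ[R] Hmod R c d :=
  mkQ _ ∘ₗ LinearMap.codRestrict (Zsub R c d)
    (LinearMap.inl R R R ∘ₗ LinearMap.lsmul R R d ∘ₗ (annI R (c * d)).subtype)
    fun r => (mem_annI.mp (dr_mem_annI r.2)).trans (mul_zero d).symm

lemma psiHom_mk {r : R} (hr : r ∈ annI R (c * d)) :
    psiHom c d ⟨r, hr⟩ =
      Hmk R c d (d * r) 0 ((mem_annI.mp (dr_mem_annI hr)).trans (mul_zero d).symm) :=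
  rfl

lemma ker_psiHom :
    LinearMap.ker (psiHom c d) = Submodule.comap (annI R (c * d)).subtype (Msub R c d) := by
  ext ⟨r, hr⟩
  rw [LinearMap.mem_ker, psiHom_mk, Hmk_eq_zero_iff, mem_comap, subtype_apply, mem_Msub]
  constructor
  · rintro ⟨s, hds, hcs⟩
    exact ⟨hr, s, mem_annI.mpr hcs, r - s, mem_annI.mpr (by linear_combination -hds),
      by linear_combination -hds, by linear_combination hcs⟩
  · rintro ⟨-, s, hs, -, -, hsd, -⟩
    exact ⟨s, by linear_combination -hsd, mem_annI.mp hs⟩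

lemma range_psiHom : LinearMap.range (psiHom c d) = Hpureh R c d ⊓ Hpurev R c d := by
  rw [← ker_sndHom, ← ker_fstHom]
  ext x
  constructor
  · rintro ⟨⟨r, hr⟩, rfl⟩
    exact ⟨(Hmk_mem_ker_sndHom_iff _).mpr (dvd_zero c),
      (Hmk_mem_ker_fstHom_iff _).mpr (dvd_mul_right d r)⟩
  · rintro ⟨hsnd, hfst⟩
    obtain ⟨f, g, h, rfl⟩ := exists_eq_Hmk x
    obtain ⟨r, rfl⟩ := (Hmk_mem_ker_sndHom_iff h).mp hsnd
    obtain ⟨s, rfl⟩ := (Hmk_mem_ker_fstHom_iff h).mp hfst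
    have hann : s - r ∈ annI R (c * d) := mem_annI.mpr (by linear_combination h)
    refine ⟨⟨s - r, hann⟩, ?_⟩
    rw [psiHom_mk, Hmk_eq_Hmk_iff]
    exact ⟨-r, by ring, by ring⟩

lemma Hpureh_inf_Hpurev_eq_bot_iff :
    Hpureh R c d ⊓ Hpurev R c d = ⊥ ↔ annI R (c * d) = Msub R c d := by
  have hle : Msub R c d ≤ annI R (c * d) := fun _ hr => (mem_Msub.mp hr).1
  calc Hpureh R c d ⊓ Hpurev R c d = ⊥
    _ ↔ LinearMap.ker (psiHom c d) = ⊤ := by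
      rw [← range_psiHom, LinearMap.range_eq_bot, LinearMap.ker_eq_top]
    _ ↔ annI R (c * d) ≤ Msub R c d := by rw [ker_psiHom, comap_subtype_eq_top]
    _ ↔ annI R (c * d) = Msub R c d := hle.ge_iff_eq'

end Intersection

theorem stmt4 (c d : R) :
    (Hpureh R c d ⊔ Hpurev R c d = ⊤ ∧ Hpureh R c d ⊓ Hpurev R c d = ⊥) ↔
      (Ideal.span {c} ⊓ Ideal.span {d} = Ideal.span {c * d} ∧
        annI R (c * d) = Msub R c d) :=
  and_congr (Hpureh_sup_Hpurev_eq_top_iff c d) (Hpureh_inf_Hpurev_eq_bot_iff c d)
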